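/- arXiv:2303.17936 — 2 statements merged into one kernel-verified Lean document; each statement's English description precedes it below -/
import Mathlib

section
/- The Eisenstein series satisfy the Ramanujan system of differential equations: for every τ in the upper half-plane ℍ, E₂'(τ) = (E₂(τ)² − E₄(τ))/12, E₄'(τ) = (E₂(τ)E₄(τ) − E₆(τ))/3, and E₆'(τ) = (E₂(τ)E₆(τ) − E₄(τ)²)/2. -/
/-!
Each of the functions `E₂' - E₂² / 12`, `E₄' - E₂ E₄ / 3` and `E₆' - E₂ E₆ / 2` is a Serre
derivative `∂ₖ F = F' - k E₂ F / 12`, with `k = 1, 4, 6`, and is modular of level one and weight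
`4, 6, 8`. For `E₄` and `E₆` this is the equivariance of `∂ₖ` on forms of weight `k`; for `E₂`,
which is only quasimodular, the defect of modularity satisfies a Riccati equation that cancels the
extra terms. By Cauchy's estimate the derivatives vanish at `i∞`, so `∂ₖ F` tends to `-k / 12`
there, as does `-k / 12` times `E₄`, `E₆`, `E₄²` respectively. The difference is then a level one
cusp form of weight less than `12`, hence zero.
-/

open Complex

noncomputable section

/-- The normalized derivative `F' = (2πi)⁻¹ dF/dτ`. -/
def nderiv (F : ℂ → ℂ) : ℂ → ℂ := fun τ => (2 * Real.pi * Complex.I)⁻¹ * deriv F τ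

/-- `q = e^{2πiτ}`. -/
def qq (τ : ℂ) : ℂ := Complex.exp (2 * Real.pi * Complex.I * τ)

/-- Sum of the `k`-th powers of the positive divisors of `n`. -/
def sigma' (k n : ℕ) : ℕ := ∑ d ∈ n.divisors, d ^ k

/-- The Eisenstein series `E₂`. -/
def E2 : ℂ → ℂ := fun τ => 1 - 24 * ∑' n : ℕ, (sigma' 1 (n + 1) : ℂ) * qq τ ^ (n + 1)

/-- The Eisenstein series `E₄`. -/
def E4 : ℂ → ℂ := fun τ => 1 + 240 * ∑' n : ℕ, (sigma' 3 (n + 1) : ℂ) * qq τ ^ (n + 1)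

/-- The Eisenstein series `E₆`. -/
def E6 : ℂ → ℂ := fun τ => 1 - 504 * ∑' n : ℕ, (sigma' 5 (n + 1) : ℂ) * qq τ ^ (n + 1)

open Filter Derivative
open UpperHalfPlane hiding I
open scoped Manifold MatrixGroups ModularForm Topology ArithmeticFunction.sigma

lemma eq_of_slash_eq_of_tendsto_atImInfty {k : ℤ} (hk : k < 12) {f g : ℍ → ℂ} {c : ℂ}
    (hf : MDiff f) (hg : MDiff g) (hf_slash : ∀ γ : SL(2, ℤ), f ∣[k] γ = f)
    (hg_slash : ∀ γ : SL(2, ℤ), g ∣[k] γ = g) (hf_lim : Tendsto f atImInfty (𝓝 c))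
    (hg_lim : Tendsto g atImInfty (𝓝 c)) : f = g := by
  have h_slash (γ : SL(2, ℤ)) : (f - g) ∣[k] γ = f - g := by
    rw [sub_eq_add_neg, SlashAction.add_slash, SlashAction.neg_slash, hf_slash, hg_slash]
  have h_lim : IsZeroAtImInfty (f - g) := by
    simpa [IsZeroAtImInfty, ZeroAtFilter] using! hf_lim.sub hg_lim
  let F : CuspForm 𝒮ℒ k :=
    { toFun := f - g
      slash_action_eq' := by
        rintro _ ⟨γ, rfl⟩
        exact h_slash γ
      holo' := hf.sub hg
      zero_at_cusps' := fun hc ↦ (OnePoint.isZeroAt_iff_forall_SL2Z hc).mpr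
        fun γ _ ↦ (h_slash γ).symm ▸ h_lim }
  have hF : F = 0 := rank_zero_iff_forall_zero.mp (CuspForm.rank_eq_zero_of_weight_lt_twelve hk) F
  exact sub_eq_zero.mp (congrArg (fun G : CuspForm 𝒮ℒ k ↦ (G : ℍ → ℂ)) hF)

lemma tendsto_atImInfty_of_hasSum_qExpansion {h : ℝ} (hh : 0 < h) {f : ℍ → ℂ} {c : ℕ → ℂ}
    (hf : ∀ τ : ℍ, HasSum (fun m ↦ c m • Function.Periodic.qParam h τ ^ m) (f τ)) :
    Tendsto f atImInfty (𝓝 (c 0)) := by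
  let g : ℍ → ℂ := fun τ ↦ (f τ - c 0) / Function.Periodic.qParam h τ
  have hg (τ : ℍ) : HasSum (fun m ↦ c (m + 1) • Function.Periodic.qParam h τ ^ m) (g τ) := by
    have h_tail := ((hasSum_nat_add_iff' 1).mpr (hf τ)).div_const (Function.Periodic.qParam h τ)
    simpa [g, pow_succ, ← mul_assoc, Function.Periodic.qParam_ne_zero] using h_tail
  have h_lim : Tendsto (fun τ : ℍ ↦ Function.Periodic.qParam h τ * g τ) atImInfty (𝓝 0) :=
    (qParam_tendsto_atImInfty hh).zero_mul_isBoundedUnder_le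
      (isBoundedAtImInfty_of_hasSum_qExpansion hh hg).isBoundedUnder_le
  simpa [g, mul_div_cancel₀, Function.Periodic.qParam_ne_zero] using h_lim.const_add (c 0)

lemma tendsto_eisensteinSeries_E2_atImInfty :
    Tendsto EisensteinSeries.E2 atImInfty (𝓝 1) := by
  refine tendsto_atImInfty_of_hasSum_qExpansion (c := fun m ↦ if m = 0 then 1 else -24 * σ 1 m)
    one_pos fun τ ↦ ?_
  simpa only [Function.Periodic.qParam, ofReal_one, div_one] using
    EisensteinSeries.hasSum_qExpansion_E2 (z := τ)

lemma tendsto_modularForm_E_atImInfty {k : ℕ} (hk : 3 ≤ k) (hk_even : Even k) :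
    Tendsto (ModularForm.E hk) atImInfty (𝓝 1) := by
  rw [← EisensteinSeries.E_qExpansion_coeff_zero hk hk_even]
  exact tendsto_atImInfty_of_hasSum_qExpansion one_pos
    (ModularForm.hasSum_qExpansion _ one_pos one_mem_strictPeriods_SL)

lemma norm_deriv_comp_ofComplex_le {F : ℍ → ℂ} (hF : MDiff F) {M A : ℝ}
    (hM : ∀ z : ℍ, A ≤ z.im → ‖F z‖ ≤ M) {z : ℍ} (hz : 2 * A ≤ z.im) :
    ‖deriv (F ∘ ofComplex) z‖ ≤ M / (z.im / 2) := by
  have h_im {w : ℂ} (hw : w ∈ Metric.closedBall (z : ℂ) (z.im / 2)) : z.im / 2 ≤ w.im := by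
    have := (Complex.abs_im_le_norm (w - z)).trans (mem_closedBall_iff_norm.mp hw)
    rw [Complex.sub_im, coe_im] at this
    linarith [(abs_le.mp this).1]
  have h_subset : Metric.closedBall (z : ℂ) (z.im / 2) ⊆ upperHalfPlaneSet :=
    fun w hw ↦ (half_pos z.im_pos).trans_le (h_im hw)
  refine Complex.norm_deriv_le_of_forall_mem_sphere_norm_le (half_pos z.im_pos)
    ((UpperHalfPlane.mdifferentiable_iff.mp hF).diffContOnCl_ball h_subset) fun w hw ↦ ?_
  have hw' := Metric.sphere_subset_closedBall hw
  rw [Function.comp_apply, ofComplex_apply_of_im_pos (h_subset hw')]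
  exact hM _ (by linarith [h_im hw', mk_im w (h_subset hw')])

lemma isZeroAtImInfty_normalizedDerivOfComplex {F : ℍ → ℂ} (hF : MDiff F)
    (hF_bdd : IsBoundedAtImInfty F) : IsZeroAtImInfty (D F) := by
  obtain ⟨M, A, hM⟩ := isBoundedAtImInfty_iff.mp hF_bdd
  have h_im : Tendsto (im : ℍ → ℝ) atImInfty atTop := tendsto_comap
  have h_bound : ∀ᶠ z : ℍ in atImInfty, ‖deriv (F ∘ ofComplex) z‖ ≤ M / (z.im / 2) := by
    filter_upwards [h_im.eventually_ge_atTop (2 * A)] with z hz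
    exact norm_deriv_comp_ofComplex_le hF hM hz
  have h_deriv : Tendsto (fun z : ℍ ↦ deriv (F ∘ ofComplex) z) atImInfty (𝓝 0) :=
    squeeze_zero_norm' h_bound ((h_im.atTop_div_const two_pos).const_div_atTop M)
  simpa only [mul_zero] using! h_deriv.const_mul (2 * Real.pi * I)⁻¹

lemma tendsto_serreDerivative_atImInfty (k : ℂ) {F : ℍ → ℂ} {c : ℂ} (hF : MDiff F)
    (hF_lim : Tendsto F atImInfty (𝓝 c)) :
    Tendsto (serreDerivative k F) atImInfty (𝓝 (-k / 12 * c)) := by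
  have h_deriv : Tendsto (D F) atImInfty (𝓝 0) :=
    isZeroAtImInfty_normalizedDerivOfComplex hF (hF_lim.isBigO_one ℝ)
  convert! h_deriv.sub ((tendsto_eisensteinSeries_E2_atImInfty.const_mul (k * 12⁻¹)).mul hF_lim)
    using 2
  ring

lemma serreDerivative_eq_smul_of_slash_eq {w : ℤ} (hw : w < 12) {k c : ℂ} {F G : ℍ → ℂ}
    (hF : MDiff F) (hG : MDiff G)
    (hF_slash : ∀ γ : SL(2, ℤ), serreDerivative k F ∣[w] γ = serreDerivative k F)
    (hG_slash : ∀ γ : SL(2, ℤ), G ∣[w] γ = G)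
    (hF_lim : Tendsto F atImInfty (𝓝 c)) (hG_lim : Tendsto G atImInfty (𝓝 c)) :
    serreDerivative k F = (-k / 12) • G :=
  eq_of_slash_eq_of_tendsto_atImInfty hw (serreDerivative_mdifferentiable k hF) (hG.const_smul _)
    hF_slash (fun γ ↦ by rw [ModularForm.SL_smul_slash, hG_slash])
    (tendsto_serreDerivative_atImInfty k hF hF_lim) (hG_lim.const_mul _)

lemma modularForm_slash_eq {k : ℤ} (f : ModularForm 𝒮ℒ k) (γ : SL(2, ℤ)) : ⇑f ∣[k] γ = f :=
  f.slash_action_eq' _ ⟨γ, rfl⟩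

lemma serreDerivative_E₄ : serreDerivative 4 ModularForm.E₄ = (-4 / 12 : ℂ) • ⇑ModularForm.E₆ :=
  serreDerivative_eq_smul_of_slash_eq (w := 6) (by norm_num) ModularForm.E₄.holo'
    ModularForm.E₆.holo'
    (fun γ ↦ serreDerivative_slash_invariant (k := 4) ModularForm.E₄.holo'
      (modularForm_slash_eq _ γ))
    (modularForm_slash_eq _) (tendsto_modularForm_E_atImInfty _ ⟨2, rfl⟩)
    (tendsto_modularForm_E_atImInfty _ ⟨3, rfl⟩)

lemma serreDerivative_E₆ :
    serreDerivative 6 ModularForm.E₆ = (-6 / 12 : ℂ) • (⇑ModularForm.E₄ * ⇑ModularForm.E₄) := by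
  have h_lim : Tendsto ModularForm.E₄ atImInfty (𝓝 1) := tendsto_modularForm_E_atImInfty _ ⟨2, rfl⟩
  exact serreDerivative_eq_smul_of_slash_eq (w := 8) (by norm_num) ModularForm.E₆.holo'
    (ModularForm.E₄.holo'.mul ModularForm.E₄.holo')
    (fun γ ↦ serreDerivative_slash_invariant (k := 6) ModularForm.E₆.holo'
      (modularForm_slash_eq _ γ))
    (modularForm_slash_eq (ModularForm.E₄.mul ModularForm.E₄))
    (tendsto_modularForm_E_atImInfty _ ⟨3, rfl⟩) (by simpa using! h_lim.mul h_lim)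

lemma hasDerivAt_D2_comp_ofComplex (γ : SL(2, ℤ)) (z : ℍ) :
    HasDerivAt (EisensteinSeries.D2 γ ∘ ofComplex)
      (2 * Real.pi * I * γ 1 0 * (-(γ 1 0 : ℂ) * denom γ z ^ (-2 : ℤ))) z := by
  have h_inv := (hasDerivAt_denom_zpow (γ : GL (Fin 2) ℝ) (-1) z).const_mul
    (2 * Real.pi * I * γ 1 0 : ℂ)
  refine (h_inv.congr_of_eventuallyEq ?_).congr_deriv (by norm_num)
  filter_upwards [isOpen_upperHalfPlaneSet.mem_nhds z.im_pos] with w hw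
  simp [EisensteinSeries.D2, ofComplex_apply_of_im_pos hw, div_eq_mul_inv]

lemma mdifferentiable_D2 (γ : SL(2, ℤ)) : MDiff (EisensteinSeries.D2 γ) :=
  fun z ↦ mdifferentiableAt_iff.mpr (hasDerivAt_D2_comp_ofComplex γ z).differentiableAt

lemma normalizedDerivOfComplex_D2 (γ : SL(2, ℤ)) :
    D (EisensteinSeries.D2 γ) = (1 / (24 * riemannZeta 2)) • EisensteinSeries.D2 γ ^ 2 := by
  ext z
  have h_pi : (Real.pi : ℂ) ≠ 0 := mod_cast Real.pi_ne_zero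
  have h_denom := denom_ne_zero (γ : GL (Fin 2) ℝ) z
  simp only [normalizedDerivOfComplex, (hasDerivAt_D2_comp_ofComplex γ z).deriv, Pi.smul_apply,
    Pi.pow_apply, smul_eq_mul, EisensteinSeries.D2, riemannZeta_two, zpow_neg]
  field_simp
  rw [I_sq]
  ring

lemma serreDerivative_one_E2_slash (γ : SL(2, ℤ)) :
    serreDerivative 1 EisensteinSeries.E2 ∣[(4 : ℤ)] γ = serreDerivative 1 EisensteinSeries.E2 := by
  set a : ℂ := 1 / (2 * riemannZeta 2) with ha
  have h_split : serreDerivative 1 EisensteinSeries.E2 =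
      serreDerivative (2 : ℤ) EisensteinSeries.E2 +
        (12⁻¹ : ℂ) • (EisensteinSeries.E2 * EisensteinSeries.E2) := by
    ext z
    simp only [serreDerivative_apply, Pi.add_apply, Pi.smul_apply, Pi.mul_apply, smul_eq_mul]
    push_cast
    ring
  have h_serre : serreDerivative (2 : ℤ) EisensteinSeries.E2 ∣[(4 : ℤ)] γ =
      serreDerivative (2 : ℤ) (EisensteinSeries.E2 - a • EisensteinSeries.D2 γ) := by
    rw [ha, ← EisensteinSeries.E2_slash_action]
    exact serreDerivative_slash_equivariant E2_mdifferentiable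
  have h_square : (EisensteinSeries.E2 * EisensteinSeries.E2) ∣[(4 : ℤ)] γ =
      (EisensteinSeries.E2 - a • EisensteinSeries.D2 γ) *
        (EisensteinSeries.E2 - a • EisensteinSeries.D2 γ) := by
    rw [ha, ← EisensteinSeries.E2_slash_action]
    exact ModularForm.mul_slash_SL2 2 2 γ _ _
  have h_riccati : D (a • EisensteinSeries.D2 γ) =
      (12⁻¹ : ℂ) • (a • EisensteinSeries.D2 γ) ^ 2 := by
    rw [normalizedDerivOfComplex_smul _ _ (mdifferentiable_D2 γ), normalizedDerivOfComplex_D2]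
    ext z
    simp only [ha, Pi.smul_apply, Pi.pow_apply, smul_eq_mul]
    ring
  rw [h_split, SlashAction.add_slash, ModularForm.SL_smul_slash, h_serre, h_square]
  ext z
  simp only [serreDerivative_apply, Pi.add_apply, Pi.smul_apply, Pi.mul_apply, Pi.sub_apply,
    Pi.pow_apply, smul_eq_mul, h_riccati, normalizedDerivOfComplex_sub _ _ E2_mdifferentiable
      ((mdifferentiable_D2 γ).const_smul a)]
  push_cast
  ring

lemma serreDerivative_one_E2 :
    serreDerivative 1 EisensteinSeries.E2 = (-1 / 12 : ℂ) • ⇑ModularForm.E₄ :=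
  serreDerivative_eq_smul_of_slash_eq (w := 4) (by norm_num) E2_mdifferentiable
    ModularForm.E₄.holo' serreDerivative_one_E2_slash (modularForm_slash_eq _)
    tendsto_eisensteinSeries_E2_atImInfty (tendsto_modularForm_E_atImInfty _ ⟨2, rfl⟩)

lemma tsum_pnat_sigma_mul_cexp_pow (k : ℕ) (τ : ℂ) :
    ∑' n : ℕ+, (σ k n : ℂ) * cexp (2 * Real.pi * I * τ) ^ (n : ℕ) =
      ∑' n : ℕ, (sigma' k (n + 1) : ℂ) * qq τ ^ (n + 1) := by
  simpa only [sigma', qq, ArithmeticFunction.sigma_apply] using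
    tsum_pnat_eq_tsum_succ (f := fun n : ℕ ↦ (σ k n : ℂ) * cexp (2 * Real.pi * I * τ) ^ n)

lemma E2_coe (z : ℍ) : E2 z = EisensteinSeries.E2 z := by
  rw [EisensteinSeries.E2_eq_tsum_cexp, tsum_pnat_sigma_mul_cexp_pow, E2]

lemma E4_coe (z : ℍ) : E4 z = ModularForm.E₄ z := by
  have h_bernoulli : bernoulli 4 = -1 / 30 := by decide +kernel
  rw [EisensteinSeries.q_expansion_bernoulli (by norm_num) ⟨2, rfl⟩, h_bernoulli]
  simp only [zpow_natCast, tsum_pnat_sigma_mul_cexp_pow, E4]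
  norm_num

lemma E6_coe (z : ℍ) : E6 z = ModularForm.E₆ z := by
  have h_bernoulli : bernoulli 6 = 1 / 42 := by decide +kernel
  rw [EisensteinSeries.q_expansion_bernoulli (by norm_num) ⟨3, rfl⟩, h_bernoulli]
  simp only [zpow_natCast, tsum_pnat_sigma_mul_cexp_pow, E6]
  norm_num

lemma nderiv_coe_of_forall_coe_eq {F : ℂ → ℂ} {G : ℍ → ℂ} (h : ∀ z : ℍ, F z = G z) (z : ℍ) :
    nderiv F z = D G z := by
  have h_eq : F =ᶠ[𝓝 (z : ℂ)] G ∘ ofComplex := by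
    filter_upwards [isOpen_upperHalfPlaneSet.mem_nhds z.im_pos] with w hw
    rw [Function.comp_apply, ofComplex_apply_of_im_pos hw, ← h]
  rw [nderiv, normalizedDerivOfComplex, h_eq.deriv_eq]

/-- The Ramanujan system of ODEs for the Eisenstein series `E₂`, `E₄`, `E₆`. -/
theorem ramanujan_system :
    ∀ τ : ℂ, 0 < τ.im →
      nderiv E2 τ = (E2 τ ^ 2 - E4 τ) / 12 ∧
      nderiv E4 τ = (E2 τ * E4 τ - E6 τ) / 3 ∧
      nderiv E6 τ = (E2 τ * E6 τ - E4 τ ^ 2) / 2 := by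
  intro τ hτ
  lift τ to ℍ using hτ
  have h₂ := congrFun serreDerivative_one_E2 τ
  have h₄ := congrFun serreDerivative_E₄ τ
  have h₆ := congrFun serreDerivative_E₆ τ
  simp only [serreDerivative_apply, Pi.smul_apply, Pi.mul_apply, smul_eq_mul] at h₂ h₄ h₆
  simp only [nderiv_coe_of_forall_coe_eq E2_coe, nderiv_coe_of_forall_coe_eq E4_coe,
    nderiv_coe_of_forall_coe_eq E6_coe, E2_coe, E4_coe, E6_coe]
  refine ⟨?_, ?_, ?_⟩
  · linear_combination h₂
  · linear_combination h₄
  · linear_combination h₆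
end
end

section
/- The Jacobi theta constant θ(τ) = Σ_{n∈ℤ} e^{πin²τ} satisfies the third-order nonlinear ODE of Jacobi: for every τ ∈ ℍ, (θ²θ_{τττ} − 15θθ_τθ_{ττ} + 30θ_τ³)² + 32(θθ_{ττ} − 3θ_τ²)³ + π²θ¹⁰(θθ_{ττ} − 3θ_τ²)² = 0, where subscripts denote ordinary derivatives with respect to τ. -/
open Complex

noncomputable section

/-- The Jacobi theta constant `θ(τ) = Σ_{n∈ℤ} e^{πin²τ}`. -/
def θ : ℂ → ℂ := fun τ => ∑' n : ℤ, Complex.exp (Real.pi * Complex.I * (n : ℂ) ^ 2 * τ)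

/-!
Write `J f` for the left-hand side of Jacobi's equation, and let `θ₄ = θ(· + 1)` and `θ₂` be the
other two theta constants of weight `1/2`, so that `τ ↦ -1/τ` fixes `θ` and swaps `θ₂` with `θ₄`.
The two bracketed expressions in `J` are Rankin–Cohen brackets, of weights `5` and `15/2`, so `J`
maps forms of weight `1/2` to forms of weight `15`. Hence `J θ`, `J θ₂`, `J θ₄` are permuted by the
modular group up to roots of unity, and the eighth power of their product is a modular form of
weight `360` for `SL(2, ℤ)`. By cancellation in their leading terms at the cusp, the three
factors decay like `e^{-3πy}`, `e^{-7πy/2}` and `e^{-3πy}`, so the eighth power vanishes to order at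
least `38 > 360 / 12` there. By the Sturm bound it is zero, so one of the three factors vanishes
identically, and then so does `J θ`.
-/

section ThetaODE

open Filter Asymptotics Topology Function.Periodic Set
open UpperHalfPlane hiding I im continuous_im
open scoped Real MatrixGroups ModularForm

local notation "ℍₒ" => upperHalfPlaneSet
local notation "I∞" => comap Complex.im atTop

/-! ### Modular forms of level one -/

lemma natCast_le_order_qExpansion {F : Type*} [FunLike F ℍ ℂ] {Γ : Subgroup (GL (Fin 2) ℝ)}
    {k : ℤ} [ModularFormClass F Γ k] {h : ℝ} (hh : 0 < h) (hΓ : h ∈ Γ.strictPeriods) (f : F)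
    {n : ℕ} (hf : f =O[atImInfty] fun τ ↦ Real.exp (-(2 * π * n / h) * τ.im)) :
    n ≤ (qExpansion h f).order := by
  refine PowerSeries.nat_le_order _ _ fun m hm ↦ ?_
  obtain ⟨C, hC⟩ := hf.bound
  obtain ⟨A, hA⟩ := (atImInfty_mem _).mp hC
  have h_bound : ∀ᶠ t : ℝ in atTop, ‖(qExpansion h f).coeff m‖ ≤
      C * Real.exp (-(2 * π * (n - m) / h) * t) := by
    filter_upwards [eventually_ge_atTop A, eventually_gt_atTop 0] with t hAt ht
    set τ : ℝ → ℍ := fun u ↦ ⟨u + t * Complex.I, by simpa using ht⟩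
    have h_int : ‖∫ u in 0..h, 1 / qParam h (τ u) ^ m * f (τ u)‖ ≤
        C * Real.exp (-(2 * π * (n - m) / h) * t) * |h - 0| := by
      refine intervalIntegral.norm_integral_le_of_norm_le_const fun u _ ↦ ?_
      have h_im : (τ u).im = t := by simp [τ]
      have h_f := hA (τ u) (by rwa [h_im])
      rw [mem_ofPred_eq, Real.norm_of_nonneg (Real.exp_nonneg _), h_im] at h_f
      rw [norm_mul, norm_div, norm_one, norm_pow, norm_qParam, coe_im, h_im, ← Real.exp_nat_mul,
        one_div, ← Real.exp_neg]
      grw [h_f]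
      rw [mul_left_comm, ← Real.exp_add]
      ring_nf
      rfl
    rw [sub_zero, abs_of_pos hh] at h_int
    rw [ModularFormClass.qExpansion_coeff_eq_intervalIntegral f hh hΓ m ht, norm_mul, norm_div,
      norm_one, norm_real, Real.norm_of_nonneg hh.le, one_div_mul_eq_div, div_le_iff₀ hh]
    exact h_int
  have h_neg : -(2 * π * (n - m) / h) < 0 := by
    have : (m : ℝ) < n := mod_cast hm
    have := sub_pos.mpr this
    rw [neg_lt_zero]
    positivity
  have h_lim : Tendsto (fun t ↦ C * Real.exp (-(2 * π * (n - m) / h) * t)) atTop (𝓝 0) := by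
    simpa using (Real.tendsto_exp_atBot.comp
      (tendsto_id.const_mul_atTop_of_neg h_neg)).const_mul C
  exact norm_le_zero_iff.mp (ge_of_tendsto h_lim h_bound)

lemma exists_modularForm_levelOne {f : ℂ → ℂ} {k : ℤ} (hf : DifferentiableOn ℂ f ℍₒ)
    (hT : ∀ z ∈ ℍₒ, f (z + 1) = f z) (hS : ∀ z ∈ ℍₒ, f (-z⁻¹) = z ^ k * f z)
    (hb : BoundedAtFilter I∞ f) : ∃ F : ModularForm 𝒮ℒ k, ∀ τ : ℍ, F τ = f τ := by
  have h_slash : ∀ γ : SL(2, ℤ), (fun τ : ℍ ↦ f τ) ∣[k] γ = fun τ : ℍ ↦ f τ := by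
    refine SlashInvariantForm.slash_action_generators_SL2Z ?_ ?_ <;> ext τ
    · rw [ModularForm.SL_slash_apply, ModularGroup.denom_S, modular_S_smul, coe_mk, inv_neg,
        hS τ τ.2, mul_right_comm, ← zpow_add₀ τ.ne_zero, add_neg_cancel, zpow_zero, one_mul]
    · have h_denom : denom ModularGroup.T τ = 1 := by
        rw [ModularGroup.denom_apply]
        simp [ModularGroup.T]
      rw [ModularForm.SL_slash_apply, h_denom, one_zpow, mul_one, modular_T_smul, coe_vadd,
        add_comm]
      exact_mod_cast hT τ τ.2
  refine ⟨{ toFun := fun τ ↦ f τ, slash_action_eq' := ?_, holo' := ?_, bdd_at_cusps' := ?_ },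
    fun _ ↦ rfl⟩
  · rintro _ ⟨γ, rfl⟩
    exact h_slash γ
  · exact UpperHalfPlane.mdifferentiable_iff.mpr
      (hf.congr fun z hz ↦ by simp [ofComplex_apply_of_im_pos hz])
  · intro c hc
    rw [Subgroup.IsArithmetic.isCusp_iff_isCusp_SL2Z] at hc
    refine (OnePoint.isBoundedAt_iff_forall_SL2Z hc).mpr fun γ _ ↦ ?_
    rw [h_slash]
    exact hb.comp_tendsto tendsto_coe_atImInfty

/-! ### Rankin–Cohen brackets -/

/-- The second Rankin–Cohen bracket of a form of weight `1/2` with itself, up to a constant. -/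
def secondBracket (f : ℂ → ℂ) (z : ℂ) : ℂ :=
  f z * deriv (deriv f) z - 3 * deriv f z ^ 2

/-- The first Rankin–Cohen bracket of a form `f` of weight `1/2` with the form
`secondBracket f` of weight `5`, up to a constant; see `thirdBracket_eq_deriv_secondBracket`. -/
def thirdBracket (f : ℂ → ℂ) (z : ℂ) : ℂ :=
  f z ^ 2 * deriv (deriv (deriv f)) z - 15 * f z * deriv f z * deriv (deriv f) z +
    30 * deriv f z ^ 3

/-- The differential expression whose vanishing is Jacobi's differential equation. -/
def jacobiDefect (f : ℂ → ℂ) (z : ℂ) : ℂ :=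
  thirdBracket f z ^ 2 + 32 * secondBracket f z ^ 3 +
    (π : ℂ) ^ 2 * f z ^ 10 * secondBracket f z ^ 2

variable {f g φ s ℓ : ℂ → ℂ} {c z : ℂ}

lemma hasDerivAt_secondBracket (hf : DifferentiableOn ℂ f ℍₒ) (hz : z ∈ ℍₒ) :
    HasDerivAt (secondBracket f)
      (f z * deriv (deriv (deriv f)) z - 5 * deriv f z * deriv (deriv f) z) z := by
  have hf₁ := hf.deriv isOpen_upperHalfPlaneSet
  have hf₂ := hf₁.deriv isOpen_upperHalfPlaneSet
  have hU := isOpen_upperHalfPlaneSet.mem_nhds hz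
  have h₀ := hf.hasDerivAt hU
  have h₁ := hf₁.hasDerivAt hU
  have h₂ := hf₂.hasDerivAt hU
  exact ((h₀.mul h₂).sub ((h₁.pow 2).const_mul 3)).congr_deriv (by push_cast; ring)

lemma thirdBracket_eq_deriv_secondBracket (hf : DifferentiableOn ℂ f ℍₒ) (hz : z ∈ ℍₒ) :
    thirdBracket f z = f z * deriv (secondBracket f) z - 10 * deriv f z * secondBracket f z := by
  rw [(hasDerivAt_secondBracket hf hz).deriv, thirdBracket, secondBracket]
  ring

lemma differentiableOn_jacobiDefect (hf : DifferentiableOn ℂ f ℍₒ) :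
    DifferentiableOn ℂ (jacobiDefect f) ℍₒ := by
  have hf₁ := hf.deriv isOpen_upperHalfPlaneSet
  have hf₂ := hf₁.deriv isOpen_upperHalfPlaneSet
  have hf₃ := hf₂.deriv isOpen_upperHalfPlaneSet
  unfold jacobiDefect thirdBracket secondBracket
  fun_prop

/-- The maps `φ` of the upper half-plane and automorphy factors `s` such that `f ↦ s • (f ∘ φ)` is
the action of weight `1/2` of a modular transformation, up to a root of unity: `s⁴` is `± φ'`, and
the logarithmic derivative `ℓ` of `s` satisfies the Riccati equation expressing that `s⁻²` is
affine. -/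
structure IsWeightHalfFactor (φ s ℓ : ℂ → ℂ) (c : ℂ) : Prop where
  mapsTo : MapsTo φ ℍₒ ℍₒ
  sq_eq_one : c ^ 2 = 1
  hasDerivAt_map : ∀ z ∈ ℍₒ, HasDerivAt φ (c * s z ^ 4) z
  hasDerivAt_factor : ∀ z ∈ ℍₒ, HasDerivAt s (ℓ z * s z) z
  hasDerivAt_logDeriv : ∀ z ∈ ℍₒ, HasDerivAt ℓ (2 * ℓ z ^ 2) z

namespace IsWeightHalfFactor

lemma hasDerivAt_comp (hs : IsWeightHalfFactor φ s ℓ c) (hg : DifferentiableOn ℂ g ℍₒ)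
    (hz : z ∈ ℍₒ) : HasDerivAt (g ∘ φ) (deriv g (φ z) * (c * s z ^ 4)) z :=
  (hg.hasDerivAt (isOpen_upperHalfPlaneSet.mem_nhds (hs.mapsTo hz))).comp z
    (hs.hasDerivAt_map z hz)

lemma deriv_eq (hs : IsWeightHalfFactor φ s ℓ c) (hg : DifferentiableOn ℂ g ℍₒ)
    (hf : EqOn f (fun z ↦ s z * g (φ z)) ℍₒ) (hz : z ∈ ℍₒ) :
    deriv f z = ℓ z * s z * g (φ z) + c * s z ^ 5 * deriv g (φ z) := by
  rw [(hf.eventuallyEq_of_mem (isOpen_upperHalfPlaneSet.mem_nhds hz)).deriv_eq]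
  have h := (hs.hasDerivAt_factor z hz).mul (hs.hasDerivAt_comp hg hz)
  refine h.deriv.trans ?_
  simp only [Function.comp_apply]
  ring

lemma deriv_deriv_eq (hs : IsWeightHalfFactor φ s ℓ c) (hg : DifferentiableOn ℂ g ℍₒ)
    (hf : EqOn f (fun z ↦ s z * g (φ z)) ℍₒ) (hz : z ∈ ℍₒ) :
    deriv (deriv f) z = 3 * ℓ z ^ 2 * s z * g (φ z) + 6 * c * ℓ z * s z ^ 5 * deriv g (φ z) +
      s z ^ 9 * deriv (deriv g) (φ z) := by
  have hf₁ : EqOn (deriv f) (fun z ↦ ℓ z * s z * g (φ z) + c * s z ^ 5 * deriv g (φ z)) ℍₒ :=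
    fun w hw ↦ hs.deriv_eq hg hf hw
  rw [(hf₁.eventuallyEq_of_mem (isOpen_upperHalfPlaneSet.mem_nhds hz)).deriv_eq]
  have h_s := hs.hasDerivAt_factor z hz
  have h := (((hs.hasDerivAt_logDeriv z hz).mul h_s).mul (hs.hasDerivAt_comp hg hz)).add
    (((h_s.pow 5).const_mul c).mul (hs.hasDerivAt_comp (hg.deriv isOpen_upperHalfPlaneSet) hz))
  refine h.deriv.trans ?_
  simp only [Function.comp_apply, Pi.mul_apply, Pi.pow_apply]
  linear_combination s z ^ 9 * deriv (deriv g) (φ z) * hs.sq_eq_one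

lemma secondBracket_eq (hs : IsWeightHalfFactor φ s ℓ c) (hg : DifferentiableOn ℂ g ℍₒ)
    (hf : EqOn f (fun z ↦ s z * g (φ z)) ℍₒ) (hz : z ∈ ℍₒ) :
    secondBracket f z = s z ^ 10 * secondBracket g (φ z) := by
  rw [secondBracket, secondBracket, hs.deriv_deriv_eq hg hf hz, hs.deriv_eq hg hf hz, hf hz]
  linear_combination -3 * s z ^ 10 * deriv g (φ z) ^ 2 * hs.sq_eq_one

lemma thirdBracket_eq (hs : IsWeightHalfFactor φ s ℓ c) (hg : DifferentiableOn ℂ g ℍₒ)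
    (hf : EqOn f (fun z ↦ s z * g (φ z)) ℍₒ) (hz : z ∈ ℍₒ) :
    thirdBracket f z = c * s z ^ 15 * thirdBracket g (φ z) := by
  have hf' : DifferentiableOn ℂ f ℍₒ := DifferentiableOn.congr (fun w hw ↦
    ((hs.hasDerivAt_factor w hw).mul
      (hs.hasDerivAt_comp hg hw)).differentiableAt.differentiableWithinAt) hf
  have hB : EqOn (secondBracket f) (fun z ↦ s z ^ 10 * secondBracket g (φ z)) ℍₒ :=
    fun w hw ↦ hs.secondBracket_eq hg hf hw
  have hB' : deriv (secondBracket f) z = 10 * ℓ z * s z ^ 10 * secondBracket g (φ z) +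
      c * s z ^ 14 * deriv (secondBracket g) (φ z) := by
    rw [(hB.eventuallyEq_of_mem (isOpen_upperHalfPlaneSet.mem_nhds hz)).deriv_eq]
    have hBg : DifferentiableOn ℂ (secondBracket g) ℍₒ := fun w hw ↦
      (hasDerivAt_secondBracket hg hw).differentiableAt.differentiableWithinAt
    refine (((hs.hasDerivAt_factor z hz).pow 10).mul (hs.hasDerivAt_comp hBg hz)).deriv.trans ?_
    simp only [Function.comp_apply, Pi.pow_apply]
    ring
  rw [thirdBracket_eq_deriv_secondBracket hf' hz,
    thirdBracket_eq_deriv_secondBracket hg (hs.mapsTo hz), hB', hs.secondBracket_eq hg hf hz,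
    hs.deriv_eq hg hf hz, hf hz]
  ring

lemma jacobiDefect_eq (hs : IsWeightHalfFactor φ s ℓ c) (hg : DifferentiableOn ℂ g ℍₒ)
    (hf : EqOn f (fun z ↦ s z * g (φ z)) ℍₒ) (hz : z ∈ ℍₒ) :
    jacobiDefect f z = s z ^ 30 * jacobiDefect g (φ z) := by
  rw [jacobiDefect, jacobiDefect, hs.thirdBracket_eq hg hf hz, hs.secondBracket_eq hg hf hz, hf hz]
  linear_combination s z ^ 30 * thirdBracket g (φ z) ^ 2 * hs.sq_eq_one

end IsWeightHalfFactor

lemma isWeightHalfFactor_add_one {ζ : ℂ} (hζ : ζ ^ 8 = 1) :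
    IsWeightHalfFactor (· + 1) (fun _ ↦ ζ) 0 (ζ ^ 4) where
  mapsTo z hz := by simpa [upperHalfPlaneSet] using hz
  sq_eq_one := by rw [← pow_mul, hζ]
  hasDerivAt_map z _ :=
    ((hasDerivAt_id z).add_const 1).congr_deriv (by rw [← pow_add, hζ])
  hasDerivAt_factor z _ := (hasDerivAt_const z ζ).congr_deriv (zero_mul ζ).symm
  hasDerivAt_logDeriv z _ := (hasDerivAt_const z 0).congr_deriv (by simp)

/-- The automorphy factor of weight `1/2` of the inversion `z ↦ -1/z`. -/
def inversionFactor (z : ℂ) : ℂ := 1 / (-I * z) ^ (1 / 2 : ℂ)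

lemma inversionFactor_sq (z : ℂ) : inversionFactor z ^ 2 = I * z⁻¹ := by
  rw [inversionFactor, div_pow, ← cpow_nat_mul]
  simp [mul_comm]

lemma ne_zero_of_mem_upperHalfPlaneSet (hz : z ∈ ℍₒ) : z ≠ 0 :=
  UpperHalfPlane.ne_zero ⟨z, hz⟩

lemma neg_inv_mem_upperHalfPlaneSet (hz : z ∈ ℍₒ) : -z⁻¹ ∈ ℍₒ := by
  simpa only [inv_neg] using! im_inv_neg_coe_pos ⟨z, hz⟩

lemma hasDerivAt_inversionFactor (hz : z ∈ ℍₒ) :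
    HasDerivAt inversionFactor (-z⁻¹ / 2 * inversionFactor z) z := by
  have h_slit : -I * z ∈ slitPlane := .inl (by simpa using! hz)
  have h_eq (w : ℂ) : inversionFactor w = (-I * w) ^ (-(1 / 2) : ℂ) := by
    rw [inversionFactor, cpow_neg, one_div]
  have h := ((hasDerivAt_id z).const_mul (-I)).cpow_const (c := -(1 / 2 : ℂ)) h_slit
  rw [funext h_eq]
  refine HasDerivAt.congr_deriv (f' := _) h ?_
  have := ne_zero_of_mem_upperHalfPlaneSet hz
  rw [id, cpow_sub _ _ (slitPlane_ne_zero h_slit), cpow_one]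
  field_simp

lemma isWeightHalfFactor_neg_inv :
    IsWeightHalfFactor (fun z ↦ -z⁻¹) inversionFactor (fun z ↦ -z⁻¹ / 2) (-1) where
  mapsTo _ := neg_inv_mem_upperHalfPlaneSet
  sq_eq_one := by norm_num
  hasDerivAt_map z hz := by
    refine (hasDerivAt_inv (ne_zero_of_mem_upperHalfPlaneSet hz)).neg.congr_deriv ?_
    rw [pow_mul (inversionFactor z) 2 2, inversionFactor_sq, mul_pow, I_sq, inv_pow]
    ring
  hasDerivAt_factor _ := hasDerivAt_inversionFactor
  hasDerivAt_logDeriv z hz := by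
    refine ((hasDerivAt_inv (ne_zero_of_mem_upperHalfPlaneSet hz)).neg.div_const 2).congr_deriv ?_
    ring

/-! ### Theta constants -/

lemma jacobiTheta₂_add_one_right (z τ : ℂ) :
    jacobiTheta₂ z (τ + 1) = jacobiTheta₂ (z + 1 / 2) τ := by
  refine tsum_congr fun n ↦ exp_eq_exp_iff_exists_int.mpr ?_
  obtain ⟨k, hk⟩ := Int.even_mul_pred_self n
  refine ⟨k, ?_⟩
  have : (n : ℂ) * (n - 1) = k + k := by exact_mod_cast hk
  linear_combination (π * I : ℂ) * this

/-- The theta constant `θ₂(τ) = Σ_{n∈ℤ} e^{πi(n+1/2)²τ}`. -/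
def thetaTwo (τ : ℂ) : ℂ := exp (π * I / 4 * τ) * jacobiTheta₂ (τ / 2) τ

/-- The theta constant `θ₄(τ) = Σ_{n∈ℤ} (-1)ⁿ e^{πin²τ}`. -/
def thetaFour (τ : ℂ) : ℂ := jacobiTheta₂ (1 / 2) τ

lemma theta_eq_jacobiTheta₂ (τ : ℂ) : θ τ = jacobiTheta₂ 0 τ := jacobiTheta_eq_jacobiTheta₂ τ

lemma differentiableOn_theta : DifferentiableOn ℂ θ ℍₒ := fun _ hz ↦
  (differentiableAt_jacobiTheta hz).differentiableWithinAt

lemma differentiableOn_thetaFour : DifferentiableOn ℂ thetaFour ℍₒ := fun _ hz ↦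
  (differentiableAt_jacobiTheta₂_snd (1 / 2) hz).differentiableWithinAt

lemma differentiableAt_jacobiTheta₂_half (hz : z ∈ ℍₒ) :
    DifferentiableAt ℂ (fun w ↦ jacobiTheta₂ (w / 2) w) z :=
  (hasFDerivAt_jacobiTheta₂ (z / 2) hz).differentiableAt.comp z
    (f := fun w ↦ (w / 2, w)) (by fun_prop)

lemma differentiableOn_thetaTwo : DifferentiableOn ℂ thetaTwo ℍₒ := fun _ hz ↦
  (DifferentiableAt.mul (by fun_prop)
    (differentiableAt_jacobiTheta₂_half hz)).differentiableWithinAt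

lemma theta_add_one (τ : ℂ) : θ (τ + 1) = thetaFour τ := by
  rw [theta_eq_jacobiTheta₂, jacobiTheta₂_add_one_right, zero_add, thetaFour]

lemma thetaFour_add_one (τ : ℂ) : thetaFour (τ + 1) = θ τ := by
  rw [thetaFour, jacobiTheta₂_add_one_right, add_halves, ← zero_add (1 : ℂ),
    jacobiTheta₂_add_left, theta_eq_jacobiTheta₂]

lemma periodic_theta : Function.Periodic θ 2 := fun τ ↦ by
  rw [← one_add_one_eq_two, ← add_assoc, theta_add_one, thetaFour_add_one]

lemma jacobiTheta₂_half_add_one (τ : ℂ) :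
    jacobiTheta₂ ((τ + 1) / 2) (τ + 1) = jacobiTheta₂ (τ / 2) τ := by
  rw [jacobiTheta₂_add_one_right, add_div, add_assoc, add_halves, jacobiTheta₂_add_left]

lemma thetaTwo_eq_add_one (τ : ℂ) : thetaTwo τ = exp (-(π * I / 4)) * thetaTwo (τ + 1) := by
  rw [thetaTwo, thetaTwo, jacobiTheta₂_half_add_one, ← mul_assoc, ← exp_add]
  ring_nf

lemma theta_eq_inversion (z : ℂ) : θ z = inversionFactor z * θ (-z⁻¹) := by
  rw [theta_eq_jacobiTheta₂, theta_eq_jacobiTheta₂, jacobiTheta₂_functional_equation,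
    inversionFactor]
  simp [neg_div]

lemma thetaFour_eq_inversion (hz : z ∈ ℍₒ) :
    thetaFour z = inversionFactor z * thetaTwo (-z⁻¹) := by
  have hz₀ := ne_zero_of_mem_upperHalfPlaneSet hz
  rw [thetaFour, thetaTwo, jacobiTheta₂_functional_equation, inversionFactor, mul_assoc,
    ← jacobiTheta₂_neg_left]
  congr 2
  · congr 1
    field_simp
    norm_num
  · congr 1 <;> field_simp

lemma thetaTwo_eq_inversion (hz : z ∈ ℍₒ) :
    thetaTwo z = inversionFactor z * thetaFour (-z⁻¹) := by
  have hz₀ := ne_zero_of_mem_upperHalfPlaneSet hz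
  have h_exp : exp (π * I / 4 * z) * exp (-π * I * (z / 2) ^ 2 / z) = 1 := by
    rw [← exp_add, ← exp_zero]
    congr 1
    field_simp
    ring
  rw [thetaTwo, thetaFour, jacobiTheta₂_functional_equation, inversionFactor, div_right_comm,
    div_self hz₀, neg_div, one_div z]
  linear_combination 1 / (-I * z) ^ (1 / 2 : ℂ) * jacobiTheta₂ (1 / 2) (-z⁻¹) * h_exp

lemma jacobiDefect_theta_eq_add_one (hz : z ∈ ℍₒ) :
    jacobiDefect θ z = jacobiDefect thetaFour (z + 1) := by
  simpa using (isWeightHalfFactor_add_one (one_pow 8)).jacobiDefect_eq differentiableOn_thetaFour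
    (fun w _ ↦ (thetaFour_add_one w).symm.trans (one_mul _).symm) hz

lemma jacobiDefect_thetaFour_eq_add_one (hz : z ∈ ℍₒ) :
    jacobiDefect thetaFour z = jacobiDefect θ (z + 1) := by
  simpa using (isWeightHalfFactor_add_one (one_pow 8)).jacobiDefect_eq differentiableOn_theta
    (fun w _ ↦ (theta_add_one w).symm.trans (one_mul _).symm) hz

lemma jacobiDefect_thetaTwo_pow_eight_eq_add_one (hz : z ∈ ℍₒ) :
    jacobiDefect thetaTwo z ^ 8 = jacobiDefect thetaTwo (z + 1) ^ 8 := by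
  have hζ : exp (-(π * I / 4)) ^ 8 = 1 := by
    rw [← exp_nat_mul, ← inv_one, ← exp_two_pi_mul_I, ← exp_neg]
    ring_nf
  rw [(isWeightHalfFactor_add_one hζ).jacobiDefect_eq differentiableOn_thetaTwo
    (fun w _ ↦ thetaTwo_eq_add_one w) hz, mul_pow, pow_right_comm, hζ, one_pow, one_mul]

lemma jacobiDefect_theta_eq_inversion (hz : z ∈ ℍₒ) :
    jacobiDefect θ z = inversionFactor z ^ 30 * jacobiDefect θ (-z⁻¹) :=
  isWeightHalfFactor_neg_inv.jacobiDefect_eq differentiableOn_theta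
    (fun w _ ↦ theta_eq_inversion w) hz

lemma jacobiDefect_thetaFour_eq_inversion (hz : z ∈ ℍₒ) :
    jacobiDefect thetaFour z = inversionFactor z ^ 30 * jacobiDefect thetaTwo (-z⁻¹) :=
  isWeightHalfFactor_neg_inv.jacobiDefect_eq differentiableOn_thetaTwo
    (fun _ ↦ thetaFour_eq_inversion) hz

lemma jacobiDefect_thetaTwo_eq_inversion (hz : z ∈ ℍₒ) :
    jacobiDefect thetaTwo z = inversionFactor z ^ 30 * jacobiDefect thetaFour (-z⁻¹) :=
  isWeightHalfFactor_neg_inv.jacobiDefect_eq differentiableOn_thetaFour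
    (fun _ ↦ thetaTwo_eq_inversion) hz

/-! ### Growth at the cusp -/

variable {F : ℂ → ℂ} {h : ℝ} {b : ℂ}

lemma eventuallyEq_deriv_comap_im (h : f =ᶠ[I∞] g) :
    deriv f =ᶠ[I∞] deriv g := by
  obtain ⟨A, hA⟩ := eventually_atTop.mp (eventually_comap.mp h)
  filter_upwards [preimage_mem_comap (Ioi_mem_atTop A)] with z hz
  exact (eventuallyEq_of_mem ((isOpen_Ioi.preimage continuous_im).mem_nhds hz)
    fun w hw ↦ hA w.im (le_of_lt hw) w rfl).deriv_eq

/-- The operator on power series in `q = exp (2πiz/h)` corresponding to `d/dz` on functions of the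
form `exp (b z) F(q)`. -/
def qDeriv (h : ℝ) (b : ℂ) (F : ℂ → ℂ) (w : ℂ) : ℂ := b * F w + 2 * π * I / h * w * deriv F w

lemma analyticAt_qDeriv {w : ℂ} (hF : AnalyticAt ℂ F w) (h : ℝ) (b : ℂ) :
    AnalyticAt ℂ (qDeriv h b F) w := by
  have := hF.deriv
  unfold qDeriv
  fun_prop

lemma qDeriv_zero (h : ℝ) (b : ℂ) (F : ℂ → ℂ) : qDeriv h b F 0 = b * F 0 := by
  simp [qDeriv]

lemma hasDerivAt_qParam (h : ℝ) (z : ℂ) : HasDerivAt (qParam h) (2 * π * I / h * qParam h z) z := by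
  have := (((hasDerivAt_id z).const_mul (2 * π * I)).div_const (h : ℂ)).cexp
  exact this.congr_deriv (by simp only [qParam, id]; ring)

lemma deriv_eventuallyEq_qDeriv (hh : 0 < h) (hF : AnalyticAt ℂ F 0)
    (hf : f =ᶠ[I∞] fun z ↦ exp (b * z) * F (qParam h z)) :
    deriv f =ᶠ[I∞] fun z ↦ exp (b * z) * qDeriv h b F (qParam h z) := by
  have hq := ((qParam_tendsto hh).mono_right nhdsWithin_le_nhds).eventually
    hF.eventually_analyticAt
  filter_upwards [eventuallyEq_deriv_comap_im hf, hq] with z hz hFz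
  have h_exp : HasDerivAt (fun w ↦ exp (b * w)) (b * exp (b * z)) z := by
    simpa [mul_comm] using ((hasDerivAt_id z).const_mul b).cexp
  refine hz.trans <|
    (h_exp.mul (hFz.differentiableAt.hasDerivAt.comp z (hasDerivAt_qParam h z))).deriv.trans ?_
  rw [qDeriv, Function.comp_apply]
  ring

lemma isBigO_comp_qParam {H : ℂ → ℂ} (hh : 0 < h) (hH : AnalyticAt ℂ H 0) (hH₀ : H 0 = 0) :
    (fun z ↦ H (qParam h z)) =O[I∞] qParam h := by
  have h_zero : H =O[𝓝 0] fun w ↦ w := by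
    simpa [hH₀] using hH.differentiableAt.isBigO_sub
  exact h_zero.comp_tendsto ((qParam_tendsto hh).mono_right nhdsWithin_le_nhds)

lemma jacobiDefect_isBigO_of_eq_one (hF : AnalyticAt ℂ F 0) (hF₀ : F 0 = 1)
    (hf : f =ᶠ[I∞] fun z ↦ F (qParam 2 z)) :
    jacobiDefect f =O[I∞] fun z ↦ qParam 2 z ^ 3 := by
  set F₁ : ℂ → ℂ := fun w ↦ π * I * deriv F w
  set F₂ := qDeriv 2 (π * I) F₁
  set F₃ := qDeriv 2 (π * I) F₂
  have hF₁ : AnalyticAt ℂ F₁ 0 := analyticAt_const.mul hF.deriv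
  have hF₂ : AnalyticAt ℂ F₂ 0 := analyticAt_qDeriv hF₁ _ _
  have hF₃ : AnalyticAt ℂ F₃ 0 := analyticAt_qDeriv hF₂ _ _
  have h_exp (z : ℂ) : exp (π * I * z) = qParam 2 z := by
    rw [qParam]; push_cast; ring_nf
  have hf₁ : deriv f =ᶠ[I∞] fun z ↦ exp (π * I * z) * F₁ (qParam 2 z) := by
    refine (deriv_eventuallyEq_qDeriv two_pos hF (b := 0) (by simpa using hf)).trans (.of_eq ?_)
    ext z
    simp only [zero_mul, exp_zero, qDeriv, ofReal_ofNat, zero_add, one_mul, h_exp, F₁]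
    ring
  have hf₂ := deriv_eventuallyEq_qDeriv two_pos hF₁ hf₁
  have hf₃ := deriv_eventuallyEq_qDeriv two_pos hF₂ hf₂
  set K : ℂ → ℂ := fun w ↦ F w * F₂ w - 3 * w * F₁ w ^ 2
  set L : ℂ → ℂ := fun w ↦ F w ^ 2 * F₃ w - 15 * w * F w * F₁ w * F₂ w + 30 * w ^ 2 * F₁ w ^ 3
  set H : ℂ → ℂ := fun w ↦ L w ^ 2 + 32 * w * K w ^ 3 + π ^ 2 * F w ^ 10 * K w ^ 2
  have hH : AnalyticAt ℂ H 0 := by fun_prop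
  have hH₀ : H 0 = 0 := by
    -- At `q = 0` one has `K = πi F₁` and `L = (πi)² F₁`, so `L²` cancels `π² K²`.
    simp only [H, K, L, hF₀, F₃, F₂, qDeriv_zero]
    linear_combination π ^ 4 * I ^ 2 * F₁ 0 ^ 2 * I_sq
  have h_eq : jacobiDefect f =ᶠ[I∞] fun z ↦ qParam 2 z ^ 2 * H (qParam 2 z) := by
    filter_upwards [hf, hf₁, hf₂, hf₃] with z h₀ h₁ h₂ h₃
    rw [jacobiDefect, thirdBracket, secondBracket, h₀, h₁, h₂, h₃, h_exp]
    ring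
  refine h_eq.trans_isBigO ?_
  simpa only [pow_succ _ 2] using (isBigO_refl _ _).mul (isBigO_comp_qParam two_pos hH hH₀)

lemma jacobiDefect_isBigO_of_exp_mul (hF : AnalyticAt ℂ F 0)
    (hf : f =ᶠ[I∞] fun z ↦ exp (π * I / 4 * z) * F (qParam 1 z)) :
    jacobiDefect f =O[I∞] fun z ↦ qParam 8 z ^ 14 := by
  set F₁ := qDeriv 1 (π * I / 4) F
  set F₂ := qDeriv 1 (π * I / 4) F₁
  set F₃ := qDeriv 1 (π * I / 4) F₂
  have hF₁ : AnalyticAt ℂ F₁ 0 := analyticAt_qDeriv hF _ _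
  have hF₂ : AnalyticAt ℂ F₂ 0 := analyticAt_qDeriv hF₁ _ _
  have hF₃ : AnalyticAt ℂ F₃ 0 := analyticAt_qDeriv hF₂ _ _
  have hf₁ := deriv_eventuallyEq_qDeriv one_pos hF hf
  have hf₂ := deriv_eventuallyEq_qDeriv one_pos hF₁ hf₁
  have hf₃ := deriv_eventuallyEq_qDeriv one_pos hF₂ hf₂
  have h_exp (z : ℂ) : exp (π * I / 4 * z) = qParam 8 z := by
    rw [qParam]; push_cast; ring_nf
  have h_pow (z : ℂ) : qParam 1 z = qParam 8 z ^ 8 := by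
    rw [qParam, qParam, ← exp_nat_mul]; push_cast; ring_nf
  set K : ℂ → ℂ := fun w ↦ F w * F₂ w - 3 * F₁ w ^ 2
  set L : ℂ → ℂ := fun w ↦ F w ^ 2 * F₃ w - 15 * F w * F₁ w * F₂ w + 30 * F₁ w ^ 3
  set H : ℂ → ℂ := fun w ↦ L w ^ 2 + 32 * K w ^ 3 + π ^ 2 * w * F w ^ 10 * K w ^ 2
  have hH : AnalyticAt ℂ H 0 := by fun_prop
  have hH₀ : H 0 = 0 := by
    -- With `b = πi/4`, at `q = 0` one has `K = -2 (b F)²` and `L = 16 (b F)³`.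
    simp only [H, K, L, F₃, F₂, F₁, qDeriv_zero]
    ring
  have h_eq : jacobiDefect f =ᶠ[I∞] fun z ↦ qParam 8 z ^ 6 * H (qParam 1 z) := by
    filter_upwards [hf, hf₁, hf₂, hf₃] with z h₀ h₁ h₂ h₃
    rw [jacobiDefect, thirdBracket, secondBracket, h₀, h₁, h₂, h₃, h_exp]
    simp only [H, K, L, h_pow]
    ring
  refine h_eq.trans_isBigO ?_
  have := (isBigO_refl (fun z ↦ qParam 8 z ^ 6) I∞).mul (isBigO_comp_qParam one_pos hH hH₀)
  simpa only [h_pow, ← pow_add] using this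

lemma analyticAt_cuspFunction_zero_of_periodic (hh : 0 < h)
    (hf : Function.Periodic f h) (hd : ∀ᶠ z in I∞, DifferentiableAt ℂ f z)
    (hb : BoundedAtFilter I∞ f) : AnalyticAt ℂ (Function.Periodic.cuspFunction h f) 0 :=
  analyticAt_of_differentiable_on_punctured_nhds_of_continuousAt
    (eventually_differentiableAt_cuspFunction_nhds_ne_zero hh hf hd)
    (differentiableAt_cuspFunction_zero hh hf hd hb).continuousAt

lemma eventually_mem_upperHalfPlaneSet : ∀ᶠ z in I∞, z ∈ ℍₒ :=
  preimage_mem_comap (Ioi_mem_atTop 0)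

lemma tendsto_theta : Tendsto θ I∞ (𝓝 1) := by
  rw [tendsto_iff_norm_sub_tendsto_zero]
  have h := isBigO_at_im_infty_jacobiTheta_sub_one.trans_tendsto
    (Real.tendsto_exp_atBot.comp
      (tendsto_comap.const_mul_atTop_of_neg (neg_neg_of_pos Real.pi_pos)))
  exact tendsto_zero_iff_norm_tendsto_zero.mp h

lemma boundedAtFilter_jacobiTheta₂_half :
    BoundedAtFilter I∞ fun τ ↦ jacobiTheta₂ (τ / 2) τ := by
  have h_sum : Summable fun n : ℤ ↦ ‖jacobiTheta₂_term n (I / 2) I‖ :=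
    (summable_jacobiTheta₂_term_iff (I / 2) I).mpr (by simp) |>.norm
  refine .of_bound (∑' n : ℤ, ‖jacobiTheta₂_term n (I / 2) I‖) ?_
  filter_upwards [preimage_mem_comap (Ici_mem_atTop 1)] with τ hτ
  have hτ : 1 ≤ τ.im := hτ
  rw [Pi.one_apply, norm_one, mul_one]
  refine tsum_of_norm_bounded h_sum.hasSum fun n ↦ ?_
  have hn : (0 : ℝ) ≤ n ^ 2 + n := by exact_mod_cast (by nlinarith [Int.le_self_sq (-n)])
  rw [norm_jacobiTheta₂_term, norm_jacobiTheta₂_term, Real.exp_le_exp]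
  simp only [neg_mul, div_ofNat_im, Complex.I_im, mul_one, one_div, tsub_le_iff_right]
  nlinarith [mul_le_mul_of_nonneg_left hτ (mul_nonneg Real.pi_pos.le hn)]

lemma qParam_pow_isBigO (h : ℝ) (n : ℕ) (l : Filter ℂ) :
    (fun z ↦ qParam h z ^ n) =O[l] fun z ↦ Real.exp (-(2 * π * n / h) * z.im) := by
  refine .of_norm_le fun z ↦ le_of_eq ?_
  rw [norm_pow, norm_qParam, ← Real.exp_nat_mul]
  ring_nf

instance neBot_comap_im_atTop : NeBot I∞ := atTop_neBot.comap_of_surj im_surjective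

lemma jacobiDefect_theta_isBigO :
    jacobiDefect θ =O[I∞] fun z ↦ Real.exp (-(3 * π) * z.im) := by
  have h_per : Function.Periodic θ (2 : ℝ) := mod_cast periodic_theta
  have hd : ∀ᶠ z in I∞, DifferentiableAt ℂ θ z :=
    eventually_mem_upperHalfPlaneSet.mono fun _ ↦ differentiableAt_jacobiTheta
  have hb : BoundedAtFilter I∞ θ := tendsto_theta.isBigO_one ℝ
  have h := jacobiDefect_isBigO_of_eq_one
    (analyticAt_cuspFunction_zero_of_periodic two_pos h_per hd hb)
    (tendsto_nhds_unique (tendsto_at_I_inf two_pos h_per hd hb) tendsto_theta)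
    (.of_eq <| funext fun z ↦ (eq_cuspFunction two_ne_zero h_per z).symm)
  exact (h.trans (qParam_pow_isBigO 2 3 I∞)).congr_right fun z ↦ by push_cast; ring_nf

lemma jacobiDefect_thetaTwo_isBigO :
    jacobiDefect thetaTwo =O[I∞] fun z ↦ Real.exp (-(7 / 2 * π) * z.im) := by
  have h_per : Function.Periodic (fun τ ↦ jacobiTheta₂ (τ / 2) τ) (1 : ℝ) := fun τ ↦ by
    simpa using jacobiTheta₂_half_add_one τ
  have hd : ∀ᶠ z in I∞, DifferentiableAt ℂ (fun τ ↦ jacobiTheta₂ (τ / 2) τ) z :=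
    eventually_mem_upperHalfPlaneSet.mono fun _ ↦ differentiableAt_jacobiTheta₂_half
  have h := jacobiDefect_isBigO_of_exp_mul
    (analyticAt_cuspFunction_zero_of_periodic one_pos h_per hd boundedAtFilter_jacobiTheta₂_half)
    (f := thetaTwo) (.of_eq <| funext fun z ↦ by
      rw [eq_cuspFunction one_ne_zero h_per z, thetaTwo])
  exact (h.trans (qParam_pow_isBigO 8 14 I∞)).congr_right fun z ↦ by push_cast; ring_nf

lemma jacobiDefect_thetaFour_isBigO :
    jacobiDefect thetaFour =O[I∞] fun z ↦ Real.exp (-(3 * π) * z.im) := by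
  have h_shift : Tendsto (fun z : ℂ ↦ z + 1) I∞ I∞ := by
    simpa [tendsto_comap_iff, Function.comp_def] using tendsto_comap
  refine IsBigO.congr' (jacobiDefect_theta_isBigO.comp_tendsto h_shift) ?_ (.of_eq (by ext; simp))
  filter_upwards [eventually_mem_upperHalfPlaneSet] with z hz
  exact (jacobiDefect_thetaFour_eq_add_one hz).symm

/-! ### Vanishing -/

/-- The product of the Jacobi expressions of the three theta constants; its eighth power is a
modular form of level one. -/
def jacobiProduct (z : ℂ) : ℂ :=
  jacobiDefect θ z * jacobiDefect thetaFour z * jacobiDefect thetaTwo z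

lemma differentiableOn_jacobiProduct : DifferentiableOn ℂ jacobiProduct ℍₒ :=
  ((differentiableOn_jacobiDefect differentiableOn_theta).mul
    (differentiableOn_jacobiDefect differentiableOn_thetaFour)).mul
    (differentiableOn_jacobiDefect differentiableOn_thetaTwo)

lemma jacobiProduct_add_one_pow_eight (hz : z ∈ ℍₒ) :
    jacobiProduct (z + 1) ^ 8 = jacobiProduct z ^ 8 := by
  simp only [jacobiProduct, mul_pow, jacobiDefect_theta_eq_add_one hz,
    jacobiDefect_thetaFour_eq_add_one hz, jacobiDefect_thetaTwo_pow_eight_eq_add_one hz]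
  ring

lemma jacobiProduct_neg_inv_pow_eight (hz : z ∈ ℍₒ) :
    jacobiProduct (-z⁻¹) ^ 8 = z ^ 360 * jacobiProduct z ^ 8 := by
  have h_prod : jacobiProduct z = inversionFactor z ^ 90 * jacobiProduct (-z⁻¹) := by
    simp only [jacobiProduct, jacobiDefect_theta_eq_inversion hz,
      jacobiDefect_thetaFour_eq_inversion hz, jacobiDefect_thetaTwo_eq_inversion hz]
    ring
  have h_factor : z ^ 360 * (inversionFactor z ^ 90) ^ 8 = 1 := by
    rw [← pow_mul, pow_mul (inversionFactor z) 2 360, inversionFactor_sq, ← mul_pow,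
      mul_left_comm, mul_inv_cancel₀ (ne_zero_of_mem_upperHalfPlaneSet hz), mul_one,
      pow_mul I 4 90, I_pow_four, one_pow]
  rw [h_prod, mul_pow, ← mul_assoc, h_factor, one_mul]

lemma jacobiProduct_pow_eight_isBigO :
    (fun z ↦ jacobiProduct z ^ 8) =O[I∞] fun z ↦ Real.exp (-(76 * π) * z.im) := by
  refine (((jacobiDefect_theta_isBigO.mul jacobiDefect_thetaFour_isBigO).mul
    jacobiDefect_thetaTwo_isBigO).pow 8).congr_right fun z ↦ ?_
  rw [← Real.exp_add, ← Real.exp_add, ← Real.exp_nat_mul]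
  ring_nf

lemma jacobiProduct_eq_zero (hz : z ∈ ℍₒ) : jacobiProduct z = 0 := by
  have h_bdd : BoundedAtFilter I∞ fun z ↦ jacobiProduct z ^ 8 :=
    jacobiProduct_pow_eight_isBigO.trans <| (Real.tendsto_exp_atBot.comp
      (tendsto_comap.const_mul_atTop_of_neg (neg_neg_of_pos (by positivity)))).isBigO_one ℝ
  obtain ⟨F, hF⟩ := exists_modularForm_levelOne (k := 360) (differentiableOn_jacobiProduct.pow 8)
    (fun _ ↦ jacobiProduct_add_one_pow_eight)
    (fun _ hw ↦ mod_cast jacobiProduct_neg_inv_pow_eight hw) h_bdd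
  have h_order : (38 : ℕ) ≤ (qExpansion 1 F).order := by
    refine natCast_le_order_qExpansion one_pos one_mem_strictPeriods_SL F ?_
    refine (jacobiProduct_pow_eight_isBigO.comp_tendsto tendsto_coe_atImInfty).congr
      (fun τ ↦ (hF τ).symm) fun τ ↦ ?_
    rw [Function.comp_apply, coe_im]
    push_cast
    ring_nf
  have h_lt : ((Int.toNat 360 / 12 : ℕ) : ℕ∞) < (38 : ℕ) := Nat.cast_lt.mpr (by decide)
  have hF₀ : F = 0 := ModularForm.sturm_bound_levelOne (h_lt.trans_le h_order)
  have h_pow : jacobiProduct z ^ 8 = 0 := by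
    rw [← Pi.pow_apply, ← hF ⟨z, hz⟩, hF₀, zero_apply]
  exact eq_zero_of_pow_eq_zero h_pow

lemma jacobiDefect_theta_eq_zero_of_thetaFour (h : EqOn (jacobiDefect thetaFour) 0 ℍₒ) :
    EqOn (jacobiDefect θ) 0 ℍₒ := fun z hz ↦
  (jacobiDefect_theta_eq_add_one hz).trans (h (by simpa [upperHalfPlaneSet] using hz))

lemma jacobiDefect_thetaFour_eq_zero_of_thetaTwo (h : EqOn (jacobiDefect thetaTwo) 0 ℍₒ) :
    EqOn (jacobiDefect thetaFour) 0 ℍₒ := fun z hz ↦ by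
  rw [jacobiDefect_thetaFour_eq_inversion hz, h (neg_inv_mem_upperHalfPlaneSet hz), Pi.zero_apply,
    mul_zero, Pi.zero_apply]

lemma jacobiDefect_theta_eq_zero : EqOn (jacobiDefect θ) 0 ℍₒ := by
  have h_analytic {f : ℂ → ℂ} (hf : DifferentiableOn ℂ f ℍₒ) :
      AnalyticOnNhd ℂ (jacobiDefect f) ℍₒ :=
    (differentiableOn_jacobiDefect hf).analyticOnNhd isOpen_upperHalfPlaneSet
  have h_conn : IsPreconnected ℍₒ := (convex_halfSpace_im_gt 0).isPreconnected
  have hθ := h_analytic differentiableOn_theta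
  have hθ₄ := h_analytic differentiableOn_thetaFour
  have hθ₂ := h_analytic differentiableOn_thetaTwo
  rcases (hθ.mul hθ₄).eq_zero_or_eq_zero_of_mul_eq_zero hθ₂ (fun _ ↦ jacobiProduct_eq_zero)
    h_conn with h | h_two
  · rcases hθ.eq_zero_or_eq_zero_of_mul_eq_zero hθ₄ h h_conn with h_theta | h_four
    exacts [h_theta, jacobiDefect_theta_eq_zero_of_thetaFour h_four]
  · exact jacobiDefect_theta_eq_zero_of_thetaFour
      (jacobiDefect_thetaFour_eq_zero_of_thetaTwo h_two)

end ThetaODE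

/-- The Jacobi theta constant satisfies Jacobi's third-order nonlinear ODE
(derivatives are ordinary derivatives with respect to `τ`). -/
theorem theta_third_order_ODE :
    ∀ τ : ℂ, 0 < τ.im →
      (θ τ ^ 2 * deriv (deriv (deriv θ)) τ - 15 * θ τ * deriv θ τ * deriv (deriv θ) τ +
          30 * (deriv θ τ) ^ 3) ^ 2 +
        32 * (θ τ * deriv (deriv θ) τ - 3 * (deriv θ τ) ^ 2) ^ 3 +
        (Real.pi : ℂ) ^ 2 * θ τ ^ 10 * (θ τ * deriv (deriv θ) τ - 3 * (deriv θ τ) ^ 2) ^ 2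
        = 0 := by
  exact fun τ hτ ↦ jacobiDefect_theta_eq_zero hτ
end
end
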